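/- arXiv:2109.04944 — 2 statements merged into one kernel-verified Lean document; each statement's English description precedes it below -/
import Mathlib

section
/- Let γ > 0, let H be a 3-uniform hypergraph on n vertices, let v ∈ V(H), and let X, Y, Z ⊆ V(H) \ {v} be pairwise disjoint with |X|, |Y| ≥ 2/γ. Suppose d_{L(v)}(X,Z) ≥ 1 − γ²/80, d_{L(v)}(Y,Z) ≤ γ²/80, and d_{L(v)}(X,Y) ≤ γ²/80. Then one of the following holds: (1) d(X,X,Y) ≤ γ and d(Y,Y,X) ≤ γ; (2) H contains at least (γ²/128)·min{|X|²|Y||Z|, |X||Y|²|Z|, |X|²|Y|²} induced copies of D₂; (3) H contains at least (γ²/128)·(1/n)·min{|X|²|Y||Z|, |X||Y|²|Z|} induced copies of D₂ which contain v. -/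
open Finset

/-- The number of induced copies of `D₂` (4 vertices spanning exactly 2 edges). -/
def inducedD2Count {V : Type} [Fintype V] [DecidableEq V] (E : Finset (Finset V)) : ℕ :=
  (((Finset.univ : Finset V).powersetCard 4).filter
    (fun S => (E.filter (fun e => e ⊆ S)).card = 2)).card

/-- The number of induced copies of `D₂` which contain the vertex `v`. -/
def inducedD2CountVia {V : Type} [Fintype V] [DecidableEq V]
    (E : Finset (Finset V)) (v : V) : ℕ :=
  (((Finset.univ : Finset V).powersetCard 4).filter
    (fun S => v ∈ S ∧ (E.filter (fun e => e ⊆ S)).card = 2)).card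

/-- `e(X,X,Y)`: the number of edges with two vertices in `X` and one vertex in `Y`. -/
def eXXY {V : Type} [DecidableEq V] (E : Finset (Finset V)) (X Y : Finset V) : ℕ :=
  (E.filter (fun e => (e ∩ X).card = 2 ∧ (e ∩ Y).card = 1)).card

/-- `d(X,X,Y) = e(X,X,Y) / (C(|X|,2)·|Y|)`. -/
noncomputable def dXXY {V : Type} [DecidableEq V] (E : Finset (Finset V))
    (X Y : Finset V) : ℝ :=
  (eXXY E X Y : ℝ) / ((X.card.choose 2 : ℝ) * (Y.card : ℝ))

/-- The number of edges of the link graph of `v` between disjoint sets `A` and `B`: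
pairs `(a,b) ∈ A × B` with `{v,a,b}` a hyperedge. -/
def eLink {V : Type} [DecidableEq V] (E : Finset (Finset V)) (v : V) (A B : Finset V) : ℕ :=
  ((A ×ˢ B).filter (fun p => ({v, p.1, p.2} : Finset V) ∈ E)).card

/-- The density of the link graph of `v` between disjoint sets `A` and `B`. -/
noncomputable def dLink {V : Type} [DecidableEq V] (E : Finset (Finset V)) (v : V)
    (A B : Finset V) : ℝ :=
  (eLink E v A B : ℝ) / ((A.card : ℝ) * (B.card : ℝ))

/-!
Call `((a, b), y, z)` with `a ≠ b` in `X`, `y ∈ Y`, `z ∈ Z` typical if `{v, a, z}` and `{v, b, z}`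
are edges while `{v, a, y}`, `{v, b, y}` and `{v, y, z}` are not; by the link densities almost all
quadruples are typical. If a typical quadruple has `{a, b, y}` as an edge, then some four of the
vertices `v, a, b, y, z` span an induced `D₂`. Hence a large `d(X,X,Y)` forces many induced copies
of `D₂`: either many copies avoid `v`, or, as each copy through `v` misses one vertex of the
quadruple and so is found at most `O(n)` times, many copies contain `v`.

If `d(X,X,Y)` is small but `d(Y,Y,X) = β` is not, then by convexity about `β² |X|² |Y|²` ordered
quadruples `c, d ∈ Y`, `a, b ∈ X` have both `{c, d, a}` and `{c, d, b}` as edges, and for most of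
them neither `{a, b, c}` nor `{a, b, d}` is an edge, so that `{a, b, c, d}` is an induced `D₂`.
-/

section OffDiag

variable {α β : Type*}

lemma cast_card_offDiag (s : Finset α) : (#s.offDiag : ℝ) = #s * (#s - 1) := by
  rw [offDiag_card, Nat.cast_sub (Nat.le_mul_self _)]
  push_cast
  ring

lemma sum_offDiag_fst (s : Finset α) (f : α → ℝ) :
    ∑ p ∈ s.offDiag, f p.1 = (#s - 1) * ∑ a ∈ s, f a := by
  classical
  have hdiag : s.offDiag = {p ∈ s ×ˢ s | p.1 ≠ p.2} := by
    ext p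
    simp [and_assoc]
  rw [hdiag, sum_filter, sum_product, mul_sum]
  refine sum_congr rfl fun a ha ↦ ?_
  simp only [← sum_filter]
  rw [sum_const, filter_ne, nsmul_eq_mul, card_erase_of_mem ha,
    Nat.cast_pred (card_pos.2 ⟨a, ha⟩)]

lemma sum_offDiag_snd (s : Finset α) (f : α → ℝ) :
    ∑ p ∈ s.offDiag, f p.2 = (#s - 1) * ∑ a ∈ s, f a := by
  rw [← sum_offDiag_fst]
  refine sum_equiv (Equiv.prodComm α α) (fun p ↦ ?_) fun _ _ ↦ rfl
  simp only [mem_offDiag, Equiv.prodComm_apply, Prod.fst_swap, Prod.snd_swap]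
  tauto

lemma card_filter_offDiag_product_fst (s : Finset α) (t : Finset β) (P : α → β → Prop)
    [∀ a b, Decidable (P a b)] :
    (#{q ∈ s.offDiag ×ˢ t | P q.1.1 q.2} : ℝ) = (#s - 1) * #{r ∈ s ×ˢ t | P r.1 r.2} := by
  simp only [card_filter, sum_product, Nat.cast_sum]
  exact sum_offDiag_fst s fun a ↦ ∑ b ∈ t, ((if P a b then 1 else 0 : ℕ) : ℝ)

lemma card_filter_offDiag_product_snd (s : Finset α) (t : Finset β) (P : α → β → Prop)
    [∀ a b, Decidable (P a b)] :
    (#{q ∈ s.offDiag ×ˢ t | P q.1.2 q.2} : ℝ) = (#s - 1) * #{r ∈ s ×ˢ t | P r.1 r.2} := by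
  simp only [card_filter, sum_product, Nat.cast_sum]
  exact sum_offDiag_snd s fun a ↦ ∑ b ∈ t, ((if P a b then 1 else 0 : ℕ) : ℝ)

/- Jensen's inequality for `d ↦ d (d - 1)`, using its tangent line at the average `t`. -/
lemma card_mul_le_sum_card_offDiag {ι : Type*} (s : Finset ι) (D : ι → Finset α) (t : ℝ)
    (ht : ∑ i ∈ s, (#(D i) : ℝ) = #s * t) :
    #s * (t * (t - 1)) ≤ ∑ i ∈ s, (#(D i).offDiag : ℝ) :=
  calc
    #s * (t * (t - 1)) = ∑ i ∈ s, ((2 * t - 1) * #(D i) - t ^ 2) := by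
      rw [sum_sub_distrib, ← mul_sum, ht, sum_const, nsmul_eq_mul]
      ring
    _ ≤ ∑ i ∈ s, (#(D i).offDiag : ℝ) := by
      refine sum_le_sum fun i _ ↦ ?_
      rw [cast_card_offDiag]
      linarith [sq_nonneg ((#(D i) : ℝ) - t)]

end OffDiag

section Filter

variable {α β γ : Type*}

lemma cast_card_filter_or_le {s : Finset α} {P Q : α → Prop} [DecidablePred P]
    [DecidablePred Q] {x y : ℝ} (hP : #{a ∈ s | P a} ≤ x) (hQ : #{a ∈ s | Q a} ≤ y) :
    #{a ∈ s | P a ∨ Q a} ≤ x + y := by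
  classical
  rw [filter_or]
  exact (Nat.cast_le.2 (card_union_le _ _)).trans (Nat.cast_add (R := ℝ) _ _ ▸ add_le_add hP hQ)

variable (s : Finset α) (t : Finset β) (u : Finset γ)

lemma card_filter_product_fst_snd (P : α → β → Prop) [∀ a b, Decidable (P a b)] :
    #{q ∈ s ×ˢ t ×ˢ u | P q.1 q.2.1} = #u * #{r ∈ s ×ˢ t | P r.1 r.2} := by
  simp only [card_filter, sum_product, mul_sum]
  refine sum_congr rfl fun a _ ↦ sum_congr rfl fun b _ ↦ ?_
  by_cases h : P a b <;> simp [h]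

lemma card_filter_product_fst_thd (P : α → γ → Prop) [∀ a b, Decidable (P a b)] :
    #{q ∈ s ×ˢ t ×ˢ u | P q.1 q.2.2} = #t * #{r ∈ s ×ˢ u | P r.1 r.2} := by
  simp only [card_filter, sum_product, mul_sum]
  refine sum_congr rfl fun a _ ↦ sum_comm.trans (sum_congr rfl fun c _ ↦ ?_)
  by_cases h : P a c <;> simp [h]

end Filter

lemma card_add_card_add_card_le_card_univ {V : Type*} [Fintype V] {X Y Z : Finset V}
    (hXY : Disjoint X Y) (hXZ : Disjoint X Z) (hYZ : Disjoint Y Z) :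
    #X + #Y + #Z ≤ Fintype.card V := by
  classical
  rw [← card_union_of_disjoint hXY,
    ← card_union_of_disjoint (disjoint_union_left.2 ⟨hXZ, hYZ⟩)]
  exact card_le_univ _

section Fibers

variable {α β V : Type*} [DecidableEq V]

lemma card_filter_le_mul_card_of_maps_to [DecidableEq β] {s : Finset α} {t : Finset β}
    {f : α → β} {m : ℕ} (hf : ∀ b, #{a ∈ s | f a = b} ≤ m) {P : α → Prop} [DecidablePred P]
    (hP : ∀ a, P a → f a ∈ t) : #{a ∈ s | P a} ≤ m * #t :=
  card_le_mul_card_image_of_maps_to (fun a ha ↦ hP a (mem_filter.1 ha).2) m fun b _ ↦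
    (card_le_card (filter_subset_filter _ (filter_subset _ _))).trans (hf b)

lemma card_filter_singleton_eq_le_one (s A : Finset V) : #{a ∈ s | {a} = A} ≤ 1 := by
  refine card_le_one.2 fun a ha b hb ↦ singleton_injective ?_
  rw [(mem_filter.1 ha).2, (mem_filter.1 hb).2]

lemma card_filter_offDiag_pair_eq_le_two (s A : Finset V) :
    #{p ∈ s.offDiag | {p.1, p.2} = A} ≤ 2 := by
  rcases eq_empty_or_nonempty {p ∈ s.offDiag | {p.1, p.2} = A} with h | ⟨⟨a, b⟩, h⟩
  · simp [h]
  · obtain ⟨-, rfl⟩ := mem_filter.1 h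
    refine (card_le_card (t := {(a, b), (b, a)}) fun ⟨c, d⟩ hcd ↦ ?_).trans card_le_two
    simp only [mem_filter, mem_offDiag, mem_insert, mem_singleton, Prod.mk.injEq] at hcd ⊢
    have hc : c ∈ ({a, b} : Finset V) := hcd.2 ▸ mem_insert_self _ _
    have hd : d ∈ ({a, b} : Finset V) := hcd.2 ▸ by simp
    grind

/- A union of a part inside `X` and a part outside `X` determines both parts. -/
lemma card_filter_union_eq_le {s : Finset α} {t : Finset β} {f : α → Finset V}
    {g : β → Finset V} {X : Finset V} {m n : ℕ} (hfX : ∀ a ∈ s, f a ⊆ X)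
    (hgX : ∀ b ∈ t, Disjoint X (g b)) (hf : ∀ A, #{a ∈ s | f a = A} ≤ m)
    (hg : ∀ A, #{b ∈ t | g b = A} ≤ n) (A : Finset V) :
    #{p ∈ s ×ˢ t | f p.1 ∪ g p.2 = A} ≤ m * n := by
  have hsub : {p ∈ s ×ˢ t | f p.1 ∪ g p.2 = A} ⊆
      {a ∈ s | f a = A ∩ X} ×ˢ {b ∈ t | g b = A \ X} := by
    rintro ⟨a, b⟩ h
    simp only [mem_filter, mem_product] at h ⊢
    obtain ⟨⟨ha, hb⟩, rfl⟩ := h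
    refine ⟨⟨ha, ?_⟩, hb, ?_⟩
    · rw [union_inter_distrib_right, inter_eq_left.2 (hfX a ha),
        disjoint_iff_inter_eq_empty.1 (hgX b hb).symm, union_empty]
    · rw [union_sdiff_distrib, sdiff_eq_empty_iff_subset.2 (hfX a ha), empty_union,
        sdiff_eq_self_of_disjoint (hgX b hb).symm]
  exact (card_le_card hsub).trans (card_product _ _ ▸ Nat.mul_le_mul (hf _) (hg _))

variable {X Y Z : Finset V} (𝓢 : Finset (Finset V))

lemma card_filter_product_singleton_union_singleton_eq_le_one (hYZ : Disjoint Y Z)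
    (A : Finset V) : #{r ∈ Y ×ˢ Z | ({r.1} ∪ {r.2} : Finset V) = A} ≤ 1 :=
  card_filter_union_eq_le (m := 1) (n := 1) (fun _ h ↦ singleton_subset_iff.2 h)
    (fun _ h ↦ disjoint_singleton_right.2 (disjoint_right.1 hYZ h))
    (card_filter_singleton_eq_le_one Y) (card_filter_singleton_eq_le_one Z) A

lemma disjoint_singleton_union_singleton (hXY : Disjoint X Y) (hXZ : Disjoint X Z) :
    ∀ r ∈ Y ×ˢ Z, Disjoint X ({r.1} ∪ {r.2}) := by
  intro r hr
  simp [disjoint_right.1 hXY (mem_product.1 hr).1, disjoint_right.1 hXZ (mem_product.1 hr).2]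

lemma pair_subset_of_mem_offDiag {p : V × V} (hp : p ∈ X.offDiag) : {p.1, p.2} ⊆ X := by
  rw [mem_offDiag] at hp
  simp [insert_subset_iff, hp]

lemma card_filter_product_mem_le (hXY : Disjoint X Y) (hXZ : Disjoint X Z)
    (hYZ : Disjoint Y Z) : #{q ∈ X ×ˢ Y ×ˢ Z | {q.1, q.2.1, q.2.2} ∈ 𝓢} ≤ #𝓢 := by
  simpa only [one_mul] using card_filter_le_mul_card_of_maps_to (m := 1 * 1)
    (card_filter_union_eq_le (fun _ h ↦ singleton_subset_iff.2 h)
      (disjoint_singleton_union_singleton hXY hXZ) (card_filter_singleton_eq_le_one X)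
      (card_filter_product_singleton_union_singleton_eq_le_one hYZ))
    fun _ h ↦ by simpa only [singleton_union] using h

lemma card_filter_offDiag_product_mem_le (hXY : Disjoint X Y) :
    #{q ∈ X.offDiag ×ˢ Y | {q.1.1, q.1.2, q.2} ∈ 𝓢} ≤ 2 * #𝓢 :=
  card_filter_le_mul_card_of_maps_to (m := 2 * 1)
    (card_filter_union_eq_le (fun _ ↦ pair_subset_of_mem_offDiag)
      (fun _ h ↦ disjoint_singleton_right.2 (disjoint_right.1 hXY h))
      (card_filter_offDiag_pair_eq_le_two X) (card_filter_singleton_eq_le_one Y))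
    fun _ h ↦ by simpa only [insert_union, singleton_union] using h

lemma card_filter_offDiag_product_product_mem_le (hXY : Disjoint X Y) (hXZ : Disjoint X Z)
    (hYZ : Disjoint Y Z) :
    #{q ∈ X.offDiag ×ˢ Y ×ˢ Z | {q.1.1, q.1.2, q.2.1, q.2.2} ∈ 𝓢} ≤ 2 * #𝓢 :=
  card_filter_le_mul_card_of_maps_to (m := 2 * 1)
    (card_filter_union_eq_le (fun _ ↦ pair_subset_of_mem_offDiag)
      (disjoint_singleton_union_singleton hXY hXZ) (card_filter_offDiag_pair_eq_le_two X)
      (card_filter_product_singleton_union_singleton_eq_le_one hYZ))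
    fun _ h ↦ by simpa only [insert_union, singleton_union] using h

lemma card_filter_offDiag_product_offDiag_mem_le (hXY : Disjoint X Y) :
    #{q ∈ X.offDiag ×ˢ Y.offDiag | {q.1.1, q.1.2, q.2.1, q.2.2} ∈ 𝓢} ≤ 4 * #𝓢 :=
  card_filter_le_mul_card_of_maps_to (m := 2 * 2)
    (card_filter_union_eq_le (fun _ ↦ pair_subset_of_mem_offDiag)
      (fun _ h ↦ hXY.mono_right (pair_subset_of_mem_offDiag h))
      (card_filter_offDiag_pair_eq_le_two X) (card_filter_offDiag_pair_eq_le_two Y))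
    fun _ h ↦ by simpa only [insert_union, singleton_union] using h

end Fibers

lemma card_filter_subset_eq_card_filter_erase_mem {V : Type*} [DecidableEq V]
    {E : Finset (Finset V)} {r : ℕ} (hE : ∀ e ∈ E, #e = r)
    {S : Finset V} (hS : #S = r + 1) : #{e ∈ E | e ⊆ S} = #{t ∈ S | S.erase t ∈ E} := by
  have himage : {e ∈ E | e ⊆ S} = {t ∈ S | S.erase t ∈ E}.image S.erase := by
    ext e
    simp only [mem_filter, mem_image]
    constructor
    · rintro ⟨heE, heS⟩
      obtain ⟨t, ht, rfl⟩ := exists_eq_insert_iff.2 ⟨heS, by rw [hE e heE, hS]⟩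
      exact ⟨t, ⟨mem_insert_self _ _, by rwa [erase_insert ht]⟩, erase_insert ht⟩
    · rintro ⟨t, ⟨-, ht⟩, rfl⟩
      exact ⟨ht, erase_subset _ _⟩
  rw [himage, card_image_of_injOn (S.erase_injOn.mono (filter_subset _ _))]

section InducedD2

variable {V : Type} [Fintype V] [DecidableEq V] {E : Finset (Finset V)}

/-- The vertex sets of the induced copies of `D₂` in the hypergraph with edge set `E`. -/
def inducedD2 (E : Finset (Finset V)) : Finset (Finset V) :=
  {S ∈ univ.powersetCard 4 | #{e ∈ E | e ⊆ S} = 2}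

lemma card_inducedD2 (E : Finset (Finset V)) : #(inducedD2 E) = inducedD2Count E := rfl

lemma card_memberSubfamily_inducedD2 (E : Finset (Finset V)) (v : V) :
    #((inducedD2 E).memberSubfamily v) = inducedD2CountVia E v := by
  rw [memberSubfamily, card_image_of_injOn ((erase_injOn' v).mono fun S hS ↦ by simp_all),
    inducedD2, filter_filter]
  simp only [inducedD2CountVia, and_comm]

lemma mem_inducedD2_iff (hE : ∀ e ∈ E, #e = 3) {a b c d : V} (h : [a, b, c, d].Nodup) :
    {a, b, c, d} ∈ inducedD2 E ↔
      (if {b, c, d} ∈ E then 1 else 0) + (if {a, c, d} ∈ E then 1 else 0) +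
        (if {a, b, d} ∈ E then 1 else 0) + (if {a, b, c} ∈ E then 1 else 0) = 2 := by
  have hcard : #({a, b, c, d} : Finset V) = 4 := by
    simpa using List.toFinset_card_of_nodup h
  have ha : ({a, b, c, d} : Finset V).erase a = {b, c, d} := by grind
  have hb : ({a, b, c, d} : Finset V).erase b = {a, c, d} := by grind
  have hc : ({a, b, c, d} : Finset V).erase c = {a, b, d} := by grind
  have hd : ({a, b, c, d} : Finset V).erase d = {a, b, c} := by grind
  rw [inducedD2, mem_filter, mem_powersetCard_univ, and_iff_right hcard,
    card_filter_subset_eq_card_filter_erase_mem hE hcard, card_filter,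
    sum_insert (by grind), sum_insert (by grind), sum_insert (by grind), sum_singleton,
    ha, hb, hc, hd, add_assoc, add_assoc]

lemma mem_inducedD2_of_common_pair (hE : ∀ e ∈ E, #e = 3) {a b c d : V}
    (h : [c, d, a, b].Nodup) (hcda : {c, d, a} ∈ E) (hcdb : {c, d, b} ∈ E)
    (habc : {a, b, c} ∉ E) (habd : {a, b, d} ∉ E) : {c, d, a, b} ∈ inducedD2 E := by
  rw [show ({a, b, c} : Finset V) = {c, a, b} by grind] at habc
  rw [show ({a, b, d} : Finset V) = {d, a, b} by grind] at habd
  simp [mem_inducedD2_iff hE h, *]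

lemma mem_inducedD2_of_link_pattern (hE : ∀ e ∈ E, #e = 3) {v a b y z : V}
    (h : [v, a, b, y, z].Nodup) (haby : {a, b, y} ∈ E) (hvaz : {v, a, z} ∈ E)
    (hvbz : {v, b, z} ∈ E) (hvay : {v, a, y} ∉ E) (hvby : {v, b, y} ∉ E)
    (hvyz : {v, y, z} ∉ E) :
    {v, a, b, y} ∈ inducedD2 E ∨ {v, a, b, z} ∈ inducedD2 E ∨ {v, a, y, z} ∈ inducedD2 E ∨
      {v, b, y, z} ∈ inducedD2 E ∨ {a, b, y, z} ∈ inducedD2 E := by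
  rw [mem_inducedD2_iff hE (by grind), mem_inducedD2_iff hE (by grind),
    mem_inducedD2_iff hE (by grind), mem_inducedD2_iff hE (by grind),
    mem_inducedD2_iff hE (by grind)]
  by_cases hvab : {v, a, b} ∈ E
  · simp [*]
  by_cases habz : {a, b, z} ∈ E
  · by_cases hayz : {a, y, z} ∈ E <;> by_cases hbyz : {b, y, z} ∈ E <;> simp [*]
  · simp [*]

end InducedD2

section Density

variable {V : Type} [DecidableEq V] {E : Finset (Finset V)} {X Y Z : Finset V}

/-- The triples `((a, b), y)` with `a ≠ b` in `X`, `y ∈ Y` and `{a, b, y} ∈ E`. Every edge counted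
by `e(X,X,Y)` appears twice, once for each order of its two vertices in `X`. -/
def orderedXXY (E : Finset (Finset V)) (X Y : Finset V) : Finset ((V × V) × V) :=
  {q ∈ X.offDiag ×ˢ Y | {q.1.1, q.1.2, q.2} ∈ E}

lemma filter_orderedXXY_eq (hE : ∀ e ∈ E, #e = 3) (hXY : Disjoint X Y) {e : Finset V}
    (he : e ∈ E) : {q ∈ orderedXXY E X Y | {q.1.1, q.1.2, q.2} = e} =
      (e ∩ X).offDiag ×ˢ (e ∩ Y) := by
  ext ⟨⟨a, b⟩, y⟩
  simp only [orderedXXY, mem_filter, mem_product, mem_offDiag, mem_inter]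
  constructor
  · rintro ⟨⟨⟨⟨ha, hb, hab⟩, hy⟩, -⟩, rfl⟩
    simp [ha, hb, hab, hy]
  · rintro ⟨⟨⟨hae, ha⟩, ⟨hbe, hb⟩, hab⟩, hye, hy⟩
    have hay := disjoint_iff_ne.1 hXY a ha y hy
    have hby := disjoint_iff_ne.1 hXY b hb y hy
    have haby : {a, b, y} = e := eq_of_subset_of_card_le (by simp [insert_subset_iff, *])
      (by rw [hE e he, card_eq_three.2 ⟨a, b, y, hab, hay, hby, rfl⟩])
    exact ⟨⟨⟨⟨ha, hb, hab⟩, hy⟩, haby ▸ he⟩, haby⟩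

lemma card_orderedXXY (hE : ∀ e ∈ E, #e = 3) (hXY : Disjoint X Y) :
    #(orderedXXY E X Y) = 2 * eXXY E X Y := by
  rw [mul_comm, eXXY, card_eq_sum_card_fiberwise (f := fun q ↦ {q.1.1, q.1.2, q.2})
    (t := {e ∈ E | #(e ∩ X) = 2 ∧ #(e ∩ Y) = 1})]
  · refine sum_const_nat fun e he ↦ ?_
    obtain ⟨heE, heX, heY⟩ := mem_filter.1 he
    rw [filter_orderedXXY_eq hE hXY heE, card_product, offDiag_card, heX, heY]
  · rintro ⟨⟨a, b⟩, y⟩ hq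
    simp only [orderedXXY, coe_filter, mem_product, mem_offDiag, Set.mem_ofPred_eq] at hq ⊢
    obtain ⟨⟨⟨ha, hb, hab⟩, hy⟩, heE⟩ := hq
    have hX : ({a, b, y} : Finset V) ∩ X = {a, b} := by
      simp [insert_inter_of_mem, ha, hb, disjoint_right.1 hXY hy]
    have hY : ({a, b, y} : Finset V) ∩ Y = {y} := by
      simp [insert_inter_of_notMem, hy, disjoint_left.1 hXY ha, disjoint_left.1 hXY hb]
    exact ⟨heE, by rw [hX, card_pair hab], by rw [hY, card_singleton]⟩

lemma card_orderedXXY_le (E : Finset (Finset V)) (X Y : Finset V) :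
    (#(orderedXXY E X Y) : ℝ) ≤ #X * (#X - 1) * #Y := by
  rw [← cast_card_offDiag, ← Nat.cast_mul, ← card_product]
  exact_mod_cast card_filter_le _ _

lemma dXXY_eq_card_orderedXXY_div (hE : ∀ e ∈ E, #e = 3) (hXY : Disjoint X Y) :
    dXXY E X Y = #(orderedXXY E X Y) / (#X * (#X - 1) * #Y) := by
  rw [card_orderedXXY hE hXY, dXXY, Nat.cast_choose_two, div_mul_eq_mul_div, ← div_mul,
    Nat.cast_mul, mul_comm, mul_div_assoc, Nat.cast_two]

lemma card_orderedXXY_eq_dXXY_mul (hE : ∀ e ∈ E, #e = 3) (hXY : Disjoint X Y) :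
    (#(orderedXXY E X Y) : ℝ) = dXXY E X Y * (#X * (#X - 1) * #Y) := by
  rw [dXXY_eq_card_orderedXXY_div hE hXY, div_mul_cancel_of_imp]
  intro h
  exact le_antisymm (h ▸ card_orderedXXY_le E X Y) (Nat.cast_nonneg _)

lemma dXXY_le_one (hE : ∀ e ∈ E, #e = 3) (hXY : Disjoint X Y) : dXXY E X Y ≤ 1 := by
  rw [dXXY_eq_card_orderedXXY_div hE hXY]
  have h := card_orderedXXY_le E X Y
  exact div_le_one_of_le₀ h ((Nat.cast_nonneg _).trans h)

lemma eLink_eq_dLink_mul (E : Finset (Finset V)) (v : V) (A B : Finset V) :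
    (eLink E v A B : ℝ) = dLink E v A B * (#A * #B) := by
  refine (div_mul_cancel_of_imp fun h ↦ le_antisymm ?_ (Nat.cast_nonneg _)).symm
  rw [← h, ← Nat.cast_mul, ← card_product]
  exact_mod_cast card_filter_le _ _

lemma card_filter_not_link_eq (E : Finset (Finset V)) (v : V) (A B : Finset V) :
    (#{p ∈ A ×ˢ B | {v, p.1, p.2} ∉ E} : ℝ) = (1 - dLink E v A B) * (#A * #B) := by
  have h := card_filter_add_card_filter_not (s := A ×ˢ B) fun p ↦ {v, p.1, p.2} ∈ E
  have h' : (eLink E v A B : ℝ) + #{p ∈ A ×ˢ B | {v, p.1, p.2} ∉ E} = #A * #B := by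
    exact_mod_cast h.trans (card_product A B)
  rw [eLink_eq_dLink_mul] at h'
  linarith

end Density

section Codegree

variable {V : Type} [DecidableEq V] {E : Finset (Finset V)} {X Y : Finset V}

/-- The quadruples `((c, d), (a, b))` with `c ≠ d` in `Y` and `a ≠ b` in `X` for which both
`{c, d, a}` and `{c, d, b}` are edges. -/
def cherries (E : Finset (Finset V)) (X Y : Finset V) : Finset ((V × V) × V × V) :=
  {q ∈ Y.offDiag ×ˢ X.offDiag | {q.1.1, q.1.2, q.2.1} ∈ E ∧ {q.1.1, q.1.2, q.2.2} ∈ E}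

lemma le_card_cherries (hE : ∀ e ∈ E, #e = 3) (hXY : Disjoint X Y) :
    #Y * (#Y - 1) * (dXXY E Y X * #X * (dXXY E Y X * #X - 1)) ≤ #(cherries E X Y) := by
  let D (p : V × V) : Finset V := {a ∈ X | {p.1, p.2, a} ∈ E}
  have hsum : ∑ p ∈ Y.offDiag, (#(D p) : ℝ) = #Y.offDiag * (dXXY E Y X * #X) := by
    have : ∑ p ∈ Y.offDiag, #(D p) = #(orderedXXY E Y X) := by
      simp only [D, orderedXXY, card_filter, sum_product]
    rw [← Nat.cast_sum, this, card_orderedXXY_eq_dXXY_mul hE hXY.symm, cast_card_offDiag]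
    ring
  have hcherries : #(cherries E X Y) = ∑ p ∈ Y.offDiag, #(D p).offDiag := by
    have (p : V × V) : (D p).offDiag =
        {q ∈ X.offDiag | {p.1, p.2, q.1} ∈ E ∧ {p.1, p.2, q.2} ∈ E} := by
      ext q
      simp only [D, mem_offDiag, mem_filter]
      tauto
    simp only [cherries, this, card_filter, sum_product]
  rw [hcherries, Nat.cast_sum, ← cast_card_offDiag]
  exact card_mul_le_sum_card_offDiag _ D _ hsum

lemma card_filter_product_offDiag_eq_card_orderedXXY (E : Finset (Finset V)) (X Y : Finset V) :
    #{r ∈ Y ×ˢ X.offDiag | {r.2.1, r.2.2, r.1} ∈ E} = #(orderedXXY E X Y) := by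
  simp only [orderedXXY, card_filter, sum_product]
  exact sum_comm

variable [Fintype V]

lemma cherries_subset (hE : ∀ e ∈ E, #e = 3) (hXY : Disjoint X Y) :
    cherries E X Y ⊆ {q ∈ Y.offDiag ×ˢ X.offDiag | {q.2.1, q.2.2, q.1.1} ∈ E} ∪
      {q ∈ Y.offDiag ×ˢ X.offDiag | {q.2.1, q.2.2, q.1.2} ∈ E} ∪
      {q ∈ Y.offDiag ×ˢ X.offDiag | {q.1.1, q.1.2, q.2.1, q.2.2} ∈ inducedD2 E} := by
  rintro ⟨⟨c, d⟩, a, b⟩ h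
  obtain ⟨hq, hcda, hcdb⟩ := mem_filter.1 h
  simp only [mem_union, mem_filter, hq, true_and]
  by_contra! hcon
  simp only [mem_product, mem_offDiag] at hq
  refine hcon.2 (mem_inducedD2_of_common_pair hE ?_ hcda hcdb hcon.1.1 hcon.1.2)
  grind [disjoint_left]

theorem dXXY_codegree_le_inducedD2Count (hE : ∀ e ∈ E, #e = 3) (hXY : Disjoint X Y) :
    #Y * (#Y - 1) * (dXXY E Y X * #X * (dXXY E Y X * #X - 1) -
      2 * dXXY E X Y * (#X * (#X - 1))) ≤ 4 * (inducedD2Count E : ℝ) := by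
  have hfst := card_filter_offDiag_product_fst Y X.offDiag fun c p ↦ {p.1, p.2, c} ∈ E
  have hsnd := card_filter_offDiag_product_snd Y X.offDiag fun c p ↦ {p.1, p.2, c} ∈ E
  rw [card_filter_product_offDiag_eq_card_orderedXXY, card_orderedXXY_eq_dXXY_mul hE hXY]
    at hfst hsnd
  have hD2 : (#{q ∈ Y.offDiag ×ˢ X.offDiag | {q.1.1, q.1.2, q.2.1, q.2.2} ∈ inducedD2 E} : ℝ) ≤
      4 * inducedD2Count E := by
    exact_mod_cast card_filter_offDiag_product_offDiag_mem_le (inducedD2 E) hXY.symm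
  have hle := Nat.cast_le (α := ℝ).2 <| (card_le_card (cherries_subset hE hXY)).trans <|
    (card_union_le _ _).trans (Nat.add_le_add_right (card_union_le _ _) _)
  simp only [Nat.cast_add] at hle
  linarith [le_card_cherries hE hXY]

end Codegree

section Link

variable {V : Type} [DecidableEq V] {E : Finset (Finset V)} {v : V} {X Y Z : Finset V}

/-- The quadruples `((a, b), y, z)` that are not typical: in the typical ones, the link graph of `v`
joins `a` and `b` to `z`, and does not join `y` to any of `a`, `b`, `z`. -/
def linkAtypical (E : Finset (Finset V)) (v : V) (X Y Z : Finset V) :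
    Finset ((V × V) × V × V) :=
  {q ∈ X.offDiag ×ˢ Y ×ˢ Z | ({v, q.1.1, q.2.2} ∉ E ∨ {v, q.1.1, q.2.1} ∈ E) ∨
    ({v, q.1.2, q.2.2} ∉ E ∨ {v, q.1.2, q.2.1} ∈ E) ∨ {v, q.2.1, q.2.2} ∈ E}

lemma card_filter_not_link_or_link_le (E : Finset (Finset V)) (v : V) (X Y Z : Finset V) :
    (#{r ∈ X ×ˢ Y ×ˢ Z | {v, r.1, r.2.2} ∉ E ∨ {v, r.1, r.2.1} ∈ E} : ℝ) ≤
      #X * #Y * #Z * (1 - dLink E v X Z + dLink E v X Y) := by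
  have hXZ : (#{r ∈ X ×ˢ Y ×ˢ Z | {v, r.1, r.2.2} ∉ E} : ℝ) =
      #Y * ((1 - dLink E v X Z) * (#X * #Z)) := by
    rw [card_filter_product_fst_thd X Y Z fun a z ↦ {v, a, z} ∉ E, Nat.cast_mul,
      card_filter_not_link_eq]
  have hXY : (#{r ∈ X ×ˢ Y ×ˢ Z | {v, r.1, r.2.1} ∈ E} : ℝ) =
      #Z * (dLink E v X Y * (#X * #Y)) := by
    rw [card_filter_product_fst_snd X Y Z fun a y ↦ {v, a, y} ∈ E, Nat.cast_mul,
      ← eLink_eq_dLink_mul, eLink]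
  linarith [cast_card_filter_or_le hXZ.le hXY.le]

lemma card_linkAtypical_le (E : Finset (Finset V)) (v : V) (X Y Z : Finset V) :
    (#(linkAtypical E v X Y Z) : ℝ) ≤ #X * (#X - 1) * #Y * #Z *
      (2 * (1 - dLink E v X Z) + 2 * dLink E v X Y + dLink E v Y Z) := by
  rcases X.eq_empty_or_nonempty with rfl | hX
  · simp [linkAtypical]
  have hfst := card_filter_offDiag_product_fst X (Y ×ˢ Z)
    fun a r ↦ {v, a, r.2} ∉ E ∨ {v, a, r.1} ∈ E
  have hsnd := card_filter_offDiag_product_snd X (Y ×ˢ Z)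
    fun a r ↦ {v, a, r.2} ∉ E ∨ {v, a, r.1} ∈ E
  have hYZ : (#{q ∈ X.offDiag ×ˢ Y ×ˢ Z | {v, q.2.1, q.2.2} ∈ E} : ℝ) =
      #X * (#X - 1) * (dLink E v Y Z * (#Y * #Z)) := by
    rw [filter_product_right fun r : V × V ↦ {v, r.1, r.2} ∈ E, card_product, Nat.cast_mul,
      cast_card_offDiag, ← eLink_eq_dLink_mul, eLink]
  have hX1 : (0 : ℝ) ≤ #X - 1 := sub_nonneg.2 (by exact_mod_cast hX.card_pos)
  have hside := mul_le_mul_of_nonneg_left (card_filter_not_link_or_link_le E v X Y Z) hX1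
  have hle := cast_card_filter_or_le hfst.le (cast_card_filter_or_le hsnd.le hYZ.le)
  rw [linkAtypical]
  linarith

variable [Fintype V]

/-- The quadruples `((a, b), y, z)` for which some four of the five vertices `v, a, b, y, z` span
an induced `D₂`. Copies through `v` are recorded by their other three vertices. -/
def inducedD2Witnesses (E : Finset (Finset V)) (v : V) (X Y Z : Finset V) :
    Finset ((V × V) × V × V) :=
  {q ∈ X.offDiag ×ˢ Y ×ˢ Z | {q.1.1, q.1.2, q.2.1} ∈ (inducedD2 E).memberSubfamily v ∨
    {q.1.1, q.1.2, q.2.2} ∈ (inducedD2 E).memberSubfamily v ∨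
    {q.1.1, q.2.1, q.2.2} ∈ (inducedD2 E).memberSubfamily v ∨
    {q.1.2, q.2.1, q.2.2} ∈ (inducedD2 E).memberSubfamily v ∨
    {q.1.1, q.1.2, q.2.1, q.2.2} ∈ inducedD2 E}

lemma card_inducedD2Witnesses_le (E : Finset (Finset V)) (v : V) (hXY : Disjoint X Y)
    (hXZ : Disjoint X Z) (hYZ : Disjoint Y Z) :
    (#(inducedD2Witnesses E v X Y Z) : ℝ) ≤
      2 * inducedD2Count E + 2 * Fintype.card V * inducedD2CountVia E v := by
  set 𝓓 := (inducedD2 E).memberSubfamily v with h𝓓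
  have haby : (#{q ∈ X.offDiag ×ˢ Y ×ˢ Z | {q.1.1, q.1.2, q.2.1} ∈ 𝓓} : ℝ) ≤
      #Z * (2 * #𝓓) := by
    rw [card_filter_product_fst_snd X.offDiag Y Z fun p y ↦ {p.1, p.2, y} ∈ 𝓓]
    exact_mod_cast Nat.mul_le_mul_left _ (card_filter_offDiag_product_mem_le 𝓓 hXY)
  have habz : (#{q ∈ X.offDiag ×ˢ Y ×ˢ Z | {q.1.1, q.1.2, q.2.2} ∈ 𝓓} : ℝ) ≤
      #Y * (2 * #𝓓) := by
    rw [card_filter_product_fst_thd X.offDiag Y Z fun p z ↦ {p.1, p.2, z} ∈ 𝓓]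
    exact_mod_cast Nat.mul_le_mul_left _ (card_filter_offDiag_product_mem_le 𝓓 hXZ)
  have hside : (#X - 1 : ℝ) * #{r ∈ X ×ˢ Y ×ˢ Z | {r.1, r.2.1, r.2.2} ∈ 𝓓} ≤ #X * #𝓓 := by
    gcongr
    · exact sub_le_self _ zero_le_one
    · exact card_filter_product_mem_le 𝓓 hXY hXZ hYZ
  have hayz := (card_filter_offDiag_product_fst X (Y ×ˢ Z)
    fun a r ↦ {a, r.1, r.2} ∈ 𝓓).trans_le hside
  have hbyz := (card_filter_offDiag_product_snd X (Y ×ˢ Z)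
    fun a r ↦ {a, r.1, r.2} ∈ 𝓓).trans_le hside
  have habyz : (#{q ∈ X.offDiag ×ˢ Y ×ˢ Z | {q.1.1, q.1.2, q.2.1, q.2.2} ∈ inducedD2 E} : ℝ) ≤
      2 * #(inducedD2 E) := by
    exact_mod_cast card_filter_offDiag_product_product_mem_le (inducedD2 E) hXY hXZ hYZ
  have hle := cast_card_filter_or_le haby <| cast_card_filter_or_le habz <|
    cast_card_filter_or_le hayz <| cast_card_filter_or_le hbyz habyz
  rw [inducedD2Witnesses, ← card_inducedD2, ← card_memberSubfamily_inducedD2, ← h𝓓]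
  have hcard : (#X + #Y + #Z : ℝ) ≤ Fintype.card V := by
    exact_mod_cast card_add_card_add_card_le_card_univ hXY hXZ hYZ
  linarith [mul_le_mul_of_nonneg_right hcard (#𝓓).cast_nonneg (α := ℝ)]

lemma filter_edge_subset_linkAtypical_union (hE : ∀ e ∈ E, #e = 3) (hvY : v ∉ Y)
    (hXY : Disjoint X Y) (hXZ : Disjoint X Z) (hYZ : Disjoint Y Z) :
    {q ∈ X.offDiag ×ˢ Y ×ˢ Z | {q.1.1, q.1.2, q.2.1} ∈ E} ⊆
      linkAtypical E v X Y Z ∪ inducedD2Witnesses E v X Y Z := by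
  rintro ⟨⟨a, b⟩, y, z⟩ h
  obtain ⟨hq, haby⟩ := mem_filter.1 h
  simp only [linkAtypical, inducedD2Witnesses, mem_union, mem_filter, hq, true_and]
  simp only [mem_product, mem_offDiag] at hq
  obtain ⟨⟨ha, hb, hab⟩, hy, hz⟩ := hq
  by_contra! hcon
  obtain ⟨⟨⟨hvaz, hvay⟩, ⟨hvbz, hvby⟩, hvyz⟩, hW⟩ := hcon
  have hnodup : [v, a, b, y, z].Nodup := by grind [disjoint_left]
  have := mem_inducedD2_of_link_pattern hE hnodup haby hvaz hvbz hvay hvby hvyz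
  simp only [mem_memberSubfamily] at hW
  grind

theorem dXXY_sub_dLink_le_inducedD2Count (hE : ∀ e ∈ E, #e = 3) (hvY : v ∉ Y) (hXY : Disjoint X Y)
    (hXZ : Disjoint X Z) (hYZ : Disjoint Y Z) :
    #X * (#X - 1) * #Y * #Z * (dXXY E X Y -
      (2 * (1 - dLink E v X Z) + 2 * dLink E v X Y + dLink E v Y Z)) ≤
      2 * (inducedD2Count E : ℝ) + 2 * Fintype.card V * inducedD2CountVia E v := by
  have hedge : (#{q ∈ X.offDiag ×ˢ Y ×ˢ Z | {q.1.1, q.1.2, q.2.1} ∈ E} : ℝ) =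
      #Z * (dXXY E X Y * (#X * (#X - 1) * #Y)) := by
    rw [card_filter_product_fst_snd X.offDiag Y Z fun p y ↦ {p.1, p.2, y} ∈ E, Nat.cast_mul,
      ← card_orderedXXY_eq_dXXY_mul hE hXY, orderedXXY]
  have hle := Nat.cast_le (α := ℝ).2 <|
    (card_le_card (filter_edge_subset_linkAtypical_union hE hvY hXY hXZ hYZ)).trans
      (card_union_le _ _)
  rw [Nat.cast_add] at hle
  linarith [card_linkAtypical_le E v X Y Z, card_inducedD2Witnesses_le E v hXY hXZ hYZ]

end Link

section Dichotomy

variable {V : Type} [Fintype V] [DecidableEq V] {E : Finset (Finset V)} {v : V}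
  {X Y Z : Finset V}

lemma sq_div_two_le_mul_sub_one {t : ℝ} (ht : 2 ≤ t) : t ^ 2 / 2 ≤ t * (t - 1) := by
  nlinarith

lemma le_inducedD2Count_or_le_inducedD2CountVia {ε : ℝ} (hE : ∀ e ∈ E, #e = 3) (hvY : v ∉ Y)
    (hXY : Disjoint X Y) (hXZ : Disjoint X Z) (hYZ : Disjoint Y Z) (hX : 2 ≤ (#X : ℝ))
    (hdXZ : 1 - ε ≤ dLink E v X Z) (hdYZ : dLink E v Y Z ≤ ε) (hdXY : dLink E v X Y ≤ ε)
    (hd : 10 * ε ≤ dXXY E X Y) :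
    5 / 8 * ε * (#X ^ 2 * #Y * #Z) ≤ inducedD2Count E ∨
      5 / 8 * ε * (#X ^ 2 * #Y * #Z) ≤ Fintype.card V * inducedD2CountVia E v := by
  have hε : 0 ≤ ε := le_trans (by unfold dLink; positivity) hdYZ
  have hgap : 5 * ε ≤
      dXXY E X Y - (2 * (1 - dLink E v X Z) + 2 * dLink E v X Y + dLink E v Y Z) := by linarith
  have hsum : 5 / 2 * ε * (#X ^ 2 * #Y * #Z) ≤
      2 * inducedD2Count E + 2 * Fintype.card V * inducedD2CountVia E v :=
    calc
      5 / 2 * ε * (#X ^ 2 * #Y * #Z) = #X ^ 2 / 2 * #Y * #Z * (5 * ε) := by ring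
      _ ≤ #X * (#X - 1) * #Y * #Z * (dXXY E X Y -
          (2 * (1 - dLink E v X Z) + 2 * dLink E v X Y + dLink E v Y Z)) := by
        have hXX := sq_div_two_le_mul_sub_one hX
        gcongr
        exact (by positivity : (0 : ℝ) ≤ #X ^ 2 / 2 * #Y * #Z).trans (by gcongr)
      _ ≤ _ := dXXY_sub_dLink_le_inducedD2Count hE hvY hXY hXZ hYZ
  by_contra! h
  linarith

lemma dXXY_sq_mul_le_inducedD2Count (hE : ∀ e ∈ E, #e = 3) (hXY : Disjoint X Y)
    (hX : 2 ≤ dXXY E Y X * #X) (hY : 2 ≤ (#Y : ℝ)) (hd : dXXY E X Y ≤ dXXY E Y X ^ 2 / 8) :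
    dXXY E Y X ^ 2 / 32 * (#X ^ 2 * #Y ^ 2) ≤ inducedD2Count E := by
  have hasym : 2 * dXXY E X Y * (#X * (#X - 1)) ≤ 2 * (dXXY E Y X ^ 2 / 8) * #X ^ 2 := by
    have hXX : (0 : ℝ) ≤ #X * (#X - 1) := cast_card_offDiag X ▸ Nat.cast_nonneg _
    gcongr
    linarith
  have hcodeg : (dXXY E Y X * #X) ^ 2 / 4 ≤
      dXXY E Y X * #X * (dXXY E Y X * #X - 1) - 2 * dXXY E X Y * (#X * (#X - 1)) := by
    linarith [sq_div_two_le_mul_sub_one hX]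
  have hprod : (#Y : ℝ) ^ 2 / 2 * ((dXXY E Y X * #X) ^ 2 / 4) ≤ 4 * inducedD2Count E := by
    have hYY := sq_div_two_le_mul_sub_one hY
    refine le_trans ?_ (dXXY_codegree_le_inducedD2Count hE hXY)
    gcongr
    exact (by positivity : (0 : ℝ) ≤ #Y ^ 2 / 2).trans hYY
  linarith

end Dichotomy

theorem homogeneous_sparse_general {V : Type} [Fintype V] [DecidableEq V]
    {E : Finset (Finset V)} (hE : ∀ e ∈ E, #e = 3) {γ : ℝ} (hγ : 0 < γ) {v : V}
    {X Y Z : Finset V} (hvY : v ∉ Y) (hXY : Disjoint X Y) (hXZ : Disjoint X Z)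
    (hYZ : Disjoint Y Z) (hX : 2 / γ ≤ #X) (hY : min 2 (2 / γ) ≤ #Y)
    (hdXZ : 1 - γ ^ 2 / 80 ≤ dLink E v X Z) (hdYZ : dLink E v Y Z ≤ γ ^ 2 / 80)
    (hdXY : dLink E v X Y ≤ γ ^ 2 / 80) :
    (dXXY E X Y ≤ γ ∧ dXXY E Y X ≤ γ) ∨
    γ ^ 2 / 128 * min ((#X : ℝ) ^ 2 * #Y * #Z) (#X ^ 2 * #Y ^ 2) ≤ inducedD2Count E ∨
    γ ^ 2 / 128 * (1 / Fintype.card V) * ((#X : ℝ) ^ 2 * #Y * #Z) ≤ inducedD2CountVia E v := by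
  rcases lt_or_ge 1 γ with hγ1 | hγ1
  · exact .inl ⟨(dXXY_le_one hE hXY).trans hγ1.le, (dXXY_le_one hE hXY.symm).trans hγ1.le⟩
  have h2γ : 2 ≤ 2 / γ := le_div_self zero_le_two hγ hγ1
  rw [min_eq_left h2γ] at hY
  rcases le_or_gt (γ ^ 2 / 8) (dXXY E X Y) with hα | hα
  · refine .inr ((le_inducedD2Count_or_le_inducedD2CountVia hE hvY hXY hXZ hYZ (h2γ.trans hX)
      hdXZ hdYZ hdXY (by linarith)).imp (fun hD2 ↦ ?_) fun hvia ↦ ?_)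
    · linarith [mul_le_mul_of_nonneg_left (min_le_left ((#X : ℝ) ^ 2 * #Y * #Z) (#X ^ 2 * #Y ^ 2))
        (sq_nonneg γ)]
    · have hV : (0 : ℝ) < Fintype.card V := Nat.cast_pos.2 (Fintype.card_pos_iff.2 ⟨v⟩)
      rw [mul_one_div, div_mul_eq_mul_div, div_le_iff₀' hV]
      linarith
  · rcases le_or_gt (dXXY E Y X) γ with hβ | hβ
    · exact .inl ⟨by nlinarith, hβ⟩
    · refine .inr (.inl (le_trans ?_ (dXXY_sq_mul_le_inducedD2Count hE hXY ?_ hY ?_)))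
      · gcongr ?_ * ?_
        · nlinarith
        · exact min_le_right _ _
      · exact ((div_le_iff₀' hγ).1 hX).trans (by gcongr)
      · exact hα.le.trans (by gcongr)

theorem homogeneous_sparse {V : Type} [Fintype V] [DecidableEq V]
    (E : Finset (Finset V)) (hE : ∀ e ∈ E, e.card = 3)
    (γ : ℝ) (hγ : 0 < γ) (v : V) (X Y Z : Finset V)
    (hvX : v ∉ X) (hvY : v ∉ Y) (hvZ : v ∉ Z)
    (hXY : Disjoint X Y) (hXZ : Disjoint X Z) (hYZ : Disjoint Y Z)
    (hX : (X.card : ℝ) ≥ 2 / γ) (hY : (Y.card : ℝ) ≥ 2 / γ)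
    (hdXZ : dLink E v X Z ≥ 1 - γ ^ 2 / 80)
    (hdYZ : dLink E v Y Z ≤ γ ^ 2 / 80)
    (hdXY : dLink E v X Y ≤ γ ^ 2 / 80) :
    (dXXY E X Y ≤ γ ∧ dXXY E Y X ≤ γ) ∨
    (inducedD2Count E : ℝ) ≥ γ ^ 2 / 128 *
      min (min ((X.card : ℝ) ^ 2 * (Y.card : ℝ) * (Z.card : ℝ))
               ((X.card : ℝ) * (Y.card : ℝ) ^ 2 * (Z.card : ℝ)))
          ((X.card : ℝ) ^ 2 * (Y.card : ℝ) ^ 2) ∨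
    (inducedD2CountVia E v : ℝ) ≥ γ ^ 2 / 128 * (1 / (Fintype.card V : ℝ)) *
      min ((X.card : ℝ) ^ 2 * (Y.card : ℝ) * (Z.card : ℝ))
          ((X.card : ℝ) * (Y.card : ℝ) ^ 2 * (Z.card : ℝ)) :=
  (homogeneous_sparse_general hE hγ hvY hXY hXZ hYZ hX ((min_le_right _ _).trans hY)
    hdXZ hdYZ hdXY).imp_right <| Or.imp
      (le_trans (by gcongr; exact min_le_left _ _)) (le_trans (by gcongr; exact min_le_left _ _))
end

section
/- Let 0 < β ≤ 1/3, let G be a cograph, and let w : V(G) → ℝ_{>0} be a weight function such that Σ_{v ∈ V(G)} w(v) = 1 and w(v) ≤ 1 − β for every v ∈ V(G). Then there is a partition V(G) = I ∪ J ∪ L such that w(I) ≥ β/2, w(J) ≥ β/2, w(L) < β, and the bipartite graph between I and J in G is complete or empty. -/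
open Finset

/-- A graph is a cograph iff it contains no induced path on 4 vertices. -/
def IsCograph {V : Type} (G : SimpleGraph V) : Prop :=
  ¬ ∃ a b c d : V, a ≠ b ∧ a ≠ c ∧ a ≠ d ∧ b ≠ c ∧ b ≠ d ∧ c ≠ d ∧
    G.Adj a b ∧ G.Adj b c ∧ G.Adj c d ∧ ¬ G.Adj a c ∧ ¬ G.Adj a d ∧ ¬ G.Adj b d

/-!
Call a vertex set `S` a light core if its outside splits into a part `A` complete to `S` and a part
`B` anticomplete to `S`, both of weight less than `β / 2`. The whole vertex set is a light core. The
weight bounds rule out light cores with at most one vertex, so the cograph property splits any light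
core as `P ∪ Q` with `P` complete or anticomplete to `Q` and `w(Q) ≤ w(P)`. If `Q` is heavy, then
`P, Q` is the required pair. Otherwise move `Q` into `A` or `B`: either the enlarged side is heavy
and forms the required pair with `P`, or `P` is a smaller light core.
-/

section HomogeneousPair

variable {V : Type*}

/-- A homogeneous pair: the bipartite graph between the two parts is complete or empty. Emptiness is
encoded as completeness in `Gᶜ`, so that both alternatives force the parts to be disjoint and are
exchanged by complementation. -/
def IsHomogeneousPair (G : SimpleGraph V) (I J : Finset V) : Prop :=
  G.IsCompleteBetween I J ∨ Gᶜ.IsCompleteBetween I J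

variable {G : SimpleGraph V} {I J : Finset V}

lemma IsHomogeneousPair.symm (h : IsHomogeneousPair G I J) : IsHomogeneousPair G J I :=
  h.imp (·.symm) (·.symm)

lemma isHomogeneousPair_compl : IsHomogeneousPair Gᶜ I J ↔ IsHomogeneousPair G I J := by
  rw [IsHomogeneousPair, compl_compl, or_comm, IsHomogeneousPair]

lemma IsHomogeneousPair.disjoint (h : IsHomogeneousPair G I J) : Disjoint I J :=
  disjoint_coe.1 <| h.elim (·.disjoint) (·.disjoint)

lemma IsHomogeneousPair.forall_adj_or_forall_not_adj (h : IsHomogeneousPair G I J) :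
    (∀ a ∈ I, ∀ b ∈ J, G.Adj a b) ∨ (∀ a ∈ I, ∀ b ∈ J, ¬ G.Adj a b) :=
  h.imp (fun hc _ ha _ hb ↦ hc ha hb) (fun hc _ ha _ hb ↦ (hc ha hb).2)

/-- A vertex set that is the union of two nonempty parts forming a homogeneous pair, as in the
recursive definition of cographs. -/
def IsHomogeneouslySplit [DecidableEq V] (G : SimpleGraph V) (S : Finset V) : Prop :=
  ∃ P Q : Finset V, P.Nonempty ∧ Q.Nonempty ∧ P ∪ Q = S ∧ IsHomogeneousPair G P Q

lemma isHomogeneouslySplit_compl [DecidableEq V] {S : Finset V} :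
    IsHomogeneouslySplit Gᶜ S ↔ IsHomogeneouslySplit G S := by
  simp only [IsHomogeneouslySplit, isHomogeneousPair_compl]

end HomogeneousPair

section Cograph

variable {V : Type} {G : SimpleGraph V}

lemma isCograph_iff_compl_adj :
    IsCograph G ↔ ∀ ⦃a b c d⦄, G.Adj a b → G.Adj b c → G.Adj c d →
      Gᶜ.Adj a c → Gᶜ.Adj a d → ¬ Gᶜ.Adj b d := by
  constructor
  · intro hG a b c d hab hbc hcd hac had hbd
    exact hG ⟨a, b, c, d, hab.ne, hac.ne, had.ne, hbc.ne, hbd.ne, hcd.ne,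
      hab, hbc, hcd, hac.2, had.2, hbd.2⟩
  · rintro h ⟨a, b, c, d, -, hac, had, -, hbd, -, hab, hbc, hcd, hac', had', hbd'⟩
    exact h hab hbc hcd ⟨hac, hac'⟩ ⟨had, had'⟩ ⟨hbd, hbd'⟩

-- The complement of the path `a b c d` is the path `b d a c`.
lemma IsCograph.compl (hG : IsCograph G) : IsCograph Gᶜ := by
  rw [isCograph_iff_compl_adj] at hG ⊢
  intro a b c d hab hbc hcd hac had hbd
  rw [compl_compl] at hac had hbd
  exact hG hbd had.symm hac hab.symm hbc hcd.symm

variable [DecidableEq V] {P Q : Finset V} {v x : V}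

-- If `v` has a neighbour `z ∈ Q`, the non-neighbours of `v` in `P` split off from everything else:
-- an edge from such a `y` to a neighbour `u ∈ P` of `v` would give the induced path `y u v z`.
lemma IsCograph.isHomogeneouslySplit_insert_of_not_adj (hG : IsCograph G)
    (hPQ : Gᶜ.IsCompleteBetween P Q) (hv : v ∉ P ∪ Q) (hQ : Q.Nonempty)
    (hx : x ∈ P) (hxv : ¬ G.Adj x v) : IsHomogeneouslySplit G (insert v (P ∪ Q)) := by
  classical
  rw [notMem_union] at hv
  by_cases hvQ : ∃ z ∈ Q, G.Adj v z
  · obtain ⟨z, hz, hvz⟩ := hvQ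
    refine ⟨{y ∈ P | ¬ G.Adj y v}, insert v ({y ∈ P | G.Adj y v} ∪ Q), ⟨x, by simp [hx, hxv]⟩,
      insert_nonempty _ _, ?_, .inr ?_⟩
    · rw [union_insert, ← union_assoc, union_comm (filter _ P), filter_union_filter_not_eq]
    · intro y hy u hu
      rw [mem_coe, mem_filter] at hy
      have hyv : Gᶜ.Adj y v := ⟨ne_of_mem_of_not_mem hy.1 hv.1, hy.2⟩
      rw [mem_coe, mem_insert, mem_union, mem_filter] at hu
      obtain rfl | ⟨huP, huv⟩ | huQ := hu
      · exact hyv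
      · have hyu : ¬ G.Adj y u := fun hyu ↦ isCograph_iff_compl_adj.1 hG hyu huv hvz hyv
          (hPQ hy.1 hz) (hPQ huP hz)
        exact ⟨fun h ↦ hy.2 (h ▸ huv), hyu⟩
      · exact hPQ hy.1 huQ
  · push Not at hvQ
    refine ⟨insert v P, Q, insert_nonempty _ _, hQ, insert_union _ _ _, .inr ?_⟩
    rw [coe_insert]
    rintro a (rfl | ha) b hb
    · exact ⟨(ne_of_mem_of_not_mem hb hv.2).symm, hvQ b hb⟩
    · exact hPQ ha hb

lemma IsCograph.isHomogeneouslySplit_insert_of_compl (hG : IsCograph G)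
    (hPQ : Gᶜ.IsCompleteBetween P Q) (hv : v ∉ P ∪ Q) (hP : P.Nonempty) (hQ : Q.Nonempty) :
    IsHomogeneouslySplit G (insert v (P ∪ Q)) := by
  by_cases hvPQ : ∀ x ∈ P ∪ Q, G.Adj v x
  · refine ⟨{v}, P ∪ Q, singleton_nonempty v, hP.inl, rfl, .inl ?_⟩
    rw [coe_singleton]
    rintro _ rfl x hx
    exact hvPQ x hx
  · push Not at hvPQ
    obtain ⟨x, hx, hvx⟩ := hvPQ
    rw [G.adj_comm] at hvx
    obtain hx | hx := mem_union.1 hx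
    · exact hG.isHomogeneouslySplit_insert_of_not_adj hPQ hv hQ hx hvx
    · rw [union_comm] at hv ⊢
      exact hG.isHomogeneouslySplit_insert_of_not_adj hPQ.symm hv hP hx hvx

lemma IsCograph.isHomogeneouslySplit_insert (hG : IsCograph G) {S : Finset V}
    (hS : IsHomogeneouslySplit G S) (hv : v ∉ S) : IsHomogeneouslySplit G (insert v S) := by
  obtain ⟨P, Q, hP, hQ, rfl, hPQ | hPQ⟩ := hS
  · rw [← isHomogeneouslySplit_compl]
    rw [← compl_compl G] at hPQ
    exact hG.compl.isHomogeneouslySplit_insert_of_compl hPQ hv hP hQ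
  · exact hG.isHomogeneouslySplit_insert_of_compl hPQ hv hP hQ

theorem IsCograph.isHomogeneouslySplit (hG : IsCograph G) {S : Finset V} (hS : S.Nontrivial) :
    IsHomogeneouslySplit G S := by
  induction S using Finset.induction_on with
  | empty => exact absurd hS not_nontrivial_empty
  | insert v T hv ih =>
    obtain rfl | hT := T.eq_empty_or_nonempty
    · exact absurd hS not_nontrivial_singleton
    obtain ⟨u, rfl⟩ | hT := hT.exists_eq_singleton_or_nontrivial
    · refine ⟨{v}, {u}, singleton_nonempty v, singleton_nonempty u, rfl, ?_⟩
      have hvu : v ≠ u := notMem_singleton.1 hv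
      simpa [IsHomogeneousPair, SimpleGraph.IsCompleteBetween, hvu] using em (G.Adj v u)
    · exact hG.isHomogeneouslySplit_insert (ih hT) hv

end Cograph

section LightCore

variable {V 𝕜 : Type*} [Field 𝕜] [LinearOrder 𝕜] [Fintype V] [DecidableEq V]

/-- The conclusion of the partition lemma for a graph with vertex weights `w`, with `(I ∪ J)ᶜ` as
the leftover part. -/
def HasHeavyHomogeneousPair (G : SimpleGraph V) (w : V → 𝕜) (β : 𝕜) : Prop :=
  ∃ I J : Finset V, IsHomogeneousPair G I J ∧ β / 2 ≤ ∑ v ∈ I, w v ∧ β / 2 ≤ ∑ v ∈ J, w v ∧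
    ∑ v ∈ (I ∪ J)ᶜ, w v < β

/-- A core `S`: its outside is split into a part `A` complete to `S` and a part `B` anticomplete
to `S`, both of weight less than `β / 2`. -/
structure IsLightCore (G : SimpleGraph V) (w : V → 𝕜) (β : 𝕜) (S A B : Finset V) : Prop where
  complete : G.IsCompleteBetween S A
  anticomplete : Gᶜ.IsCompleteBetween S B
  disjoint : Disjoint A B
  union_eq_univ : S ∪ A ∪ B = univ
  sum_complete_lt : ∑ v ∈ A, w v < β / 2
  sum_anticomplete_lt : ∑ v ∈ B, w v < β / 2

variable {G : SimpleGraph V} {w : V → 𝕜} {β : 𝕜} {S A B P Q : Finset V}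

lemma hasHeavyHomogeneousPair_compl :
    HasHeavyHomogeneousPair Gᶜ w β ↔ HasHeavyHomogeneousPair G w β := by
  simp only [HasHeavyHomogeneousPair, isHomogeneousPair_compl]

lemma IsHomogeneousPair.hasHeavyHomogeneousPair [IsStrictOrderedRing 𝕜] {I J : Finset V}
    (hIJ : IsHomogeneousPair G I J) (hI : β / 2 ≤ ∑ v ∈ I, w v) (hJ : β / 2 ≤ ∑ v ∈ J, w v)
    (hrest : ∑ v, w v - ∑ v ∈ I, w v - ∑ v ∈ J, w v < β) : HasHeavyHomogeneousPair G w β := by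
  refine ⟨I, J, hIJ, hI, hJ, ?_⟩
  have htotal := sum_add_sum_compl (I ∪ J) w
  rw [sum_union hIJ.disjoint] at htotal
  linarith

namespace IsLightCore

lemma compl (h : IsLightCore G w β S A B) : IsLightCore Gᶜ w β S B A where
  complete := h.anticomplete
  anticomplete := by rw [compl_compl]; exact h.complete
  disjoint := h.disjoint.symm
  union_eq_univ := by rw [union_right_comm, h.union_eq_univ]
  sum_complete_lt := h.sum_anticomplete_lt
  sum_anticomplete_lt := h.sum_complete_lt

lemma sum_add_sum_add_sum (h : IsLightCore G w β S A B) :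
    ∑ v ∈ S, w v + ∑ v ∈ A, w v + ∑ v ∈ B, w v = ∑ v, w v := by
  have hSA : Disjoint S A := disjoint_coe.1 h.complete.disjoint
  have hSB : Disjoint S B := disjoint_coe.1 h.anticomplete.disjoint
  rw [← h.union_eq_univ, sum_union (disjoint_union_left.2 ⟨hSB, h.disjoint⟩), sum_union hSA]

variable [IsStrictOrderedRing 𝕜]

lemma nontrivial (h : IsLightCore G w β S A B) (hβ0 : 0 < β) (hβ : β ≤ (∑ v, w v) / 2)
    (hw : ∀ v, w v ≤ ∑ u, w u - β) : S.Nontrivial := by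
  have htotal := h.sum_add_sum_add_sum
  have hA := h.sum_complete_lt
  have hB := h.sum_anticomplete_lt
  obtain rfl | hS := S.eq_empty_or_nonempty
  · rw [sum_empty] at htotal
    linarith
  obtain ⟨v, rfl⟩ | hS := hS.exists_eq_singleton_or_nontrivial
  · rw [sum_singleton] at htotal
    linarith [hw v]
  · exact hS

lemma heavyPair_or_shrink_of_complete (h : IsLightCore G w β (P ∪ Q) A B)
    (hPQ : G.IsCompleteBetween P Q) (hQP : ∑ v ∈ Q, w v ≤ ∑ v ∈ P, w v)
    (hβ : β ≤ (∑ v, w v) / 2) :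
    HasHeavyHomogeneousPair G w β ∨ IsLightCore G w β P (A ∪ Q) B := by
  have hA := h.sum_complete_lt
  have hB := h.sum_anticomplete_lt
  have hQA : Disjoint Q A := (disjoint_coe.1 h.complete.disjoint).mono_left subset_union_right
  have hQB : Disjoint Q B := (disjoint_coe.1 h.anticomplete.disjoint).mono_left subset_union_right
  have hsumAQ : ∑ v ∈ A ∪ Q, w v = ∑ v ∈ A, w v + ∑ v ∈ Q, w v := sum_union hQA.symm
  have htotal := h.sum_add_sum_add_sum
  rw [sum_union (disjoint_coe.1 hPQ.disjoint)] at htotal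
  have hPAQ : G.IsCompleteBetween P ↑(A ∪ Q) := fun x hx y hy ↦
    (mem_union.1 hy).elim (h.complete (mem_union_left Q hx) ·) (hPQ hx ·)
  by_cases hQ : β / 2 ≤ ∑ v ∈ Q, w v
  · left
    exact IsHomogeneousPair.hasHeavyHomogeneousPair (.inl hPQ) (by linarith) hQ (by linarith)
  by_cases hAQ : β / 2 ≤ ∑ v ∈ A ∪ Q, w v
  · left
    exact IsHomogeneousPair.hasHeavyHomogeneousPair (.inl hPAQ) (by linarith) hAQ
      (by linarith [hsumAQ])
  · right
    exact {
      complete := hPAQ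
      anticomplete := fun x hx ↦ h.anticomplete (mem_union_left Q hx)
      disjoint := disjoint_union_left.2 ⟨h.disjoint, hQB⟩
      union_eq_univ := by rw [← h.union_eq_univ, union_comm A Q, union_assoc P Q A]
      sum_complete_lt := not_le.1 hAQ
      sum_anticomplete_lt := hB }

lemma heavyPair_or_shrink (h : IsLightCore G w β (P ∪ Q) A B) (hPQ : IsHomogeneousPair G P Q)
    (hQP : ∑ v ∈ Q, w v ≤ ∑ v ∈ P, w v) (hβ : β ≤ (∑ v, w v) / 2) :
    HasHeavyHomogeneousPair G w β ∨ ∃ A' B', IsLightCore G w β P A' B' := by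
  obtain hPQ | hPQ := hPQ
  · exact (h.heavyPair_or_shrink_of_complete hPQ hQP hβ).imp_right fun h' ↦ ⟨_, _, h'⟩
  · rw [← hasHeavyHomogeneousPair_compl]
    refine (h.compl.heavyPair_or_shrink_of_complete hPQ hQP hβ).imp_right fun h' ↦ ?_
    exact ⟨_, _, compl_compl G ▸ h'.compl⟩

theorem hasHeavyHomogeneousPair {V : Type} [Fintype V] [DecidableEq V] {G : SimpleGraph V}
    {w : V → 𝕜} {S A B : Finset V} (h : IsLightCore G w β S A B) (hG : IsCograph G) (hβ0 : 0 < β)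
    (hβ : β ≤ (∑ v, w v) / 2) (hw : ∀ v, w v ≤ ∑ u, w u - β) :
    HasHeavyHomogeneousPair G w β := by
  induction S using Finset.strongInduction generalizing A B with
  | H S ih =>
    obtain ⟨P, Q, hP, hQ, hS, hPQ⟩ := hG.isHomogeneouslySplit (h.nontrivial hβ0 hβ hw)
    wlog hQP : ∑ v ∈ Q, w v ≤ ∑ v ∈ P, w v generalizing P Q
    · exact this Q P hQ hP (union_comm P Q ▸ hS) hPQ.symm (le_of_not_ge hQP)
    subst hS
    obtain hpair | ⟨A', B', h'⟩ := h.heavyPair_or_shrink hPQ hQP hβ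
    · exact hpair
    · obtain ⟨x, hx⟩ := hQ
      have hssub : P ⊂ P ∪ Q := subset_union_left.ssubset_of_mem_notMem (mem_union_right P hx)
        (disjoint_right.1 hPQ.disjoint hx)
      exact ih P hssub h'

end IsLightCore

end LightCore

theorem weighted_cograph_partition_general {𝕜 : Type*} [Field 𝕜] [LinearOrder 𝕜]
    [IsStrictOrderedRing 𝕜] {V : Type} [Fintype V] [DecidableEq V]
    (G : SimpleGraph V) (hG : IsCograph G) (β : 𝕜) (hβ0 : 0 < β) (w : V → 𝕜)
    (hβ : β ≤ (∑ v, w v) / 2) (hw : ∀ v, w v ≤ ∑ u, w u - β) :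
    ∃ I J L : Finset V,
      Disjoint I J ∧ Disjoint I L ∧ Disjoint J L ∧
      I ∪ J ∪ L = Finset.univ ∧
      β / 2 ≤ ∑ v ∈ I, w v ∧
      β / 2 ≤ ∑ v ∈ J, w v ∧
      ∑ v ∈ L, w v < β ∧
      ((∀ a ∈ I, ∀ b ∈ J, G.Adj a b) ∨ (∀ a ∈ I, ∀ b ∈ J, ¬ G.Adj a b)) := by
  have hcore : IsLightCore G w β univ ∅ ∅ :=
    { complete := by simp [SimpleGraph.IsCompleteBetween]
      anticomplete := by simp [SimpleGraph.IsCompleteBetween]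
      disjoint := disjoint_empty_left ∅
      union_eq_univ := by rw [union_empty, union_empty]
      sum_complete_lt := by rw [sum_empty]; exact half_pos hβ0
      sum_anticomplete_lt := by rw [sum_empty]; exact half_pos hβ0 }
  obtain ⟨I, J, hIJ, hI, hJ, hrest⟩ := hcore.hasHeavyHomogeneousPair hG hβ0 hβ hw
  exact ⟨I, J, (I ∪ J)ᶜ, hIJ.disjoint, disjoint_compl_right.mono_left subset_union_left,
    disjoint_compl_right.mono_left subset_union_right, union_compl _, hI, hJ, hrest,
    hIJ.forall_adj_or_forall_not_adj⟩

/-- Weighted partition lemma for cographs. -/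
theorem weighted_cograph_partition {V : Type} [Fintype V] [DecidableEq V]
    (G : SimpleGraph V) (hG : IsCograph G)
    (β : ℝ) (hβ0 : 0 < β) (hβ1 : β ≤ 1 / 3)
    (w : V → ℝ) (hw : ∀ v, 0 < w v)
    (hsum : ∑ v, w v = 1) (hwv : ∀ v, w v ≤ 1 - β) :
    ∃ I J L : Finset V,
      Disjoint I J ∧ Disjoint I L ∧ Disjoint J L ∧
      I ∪ J ∪ L = Finset.univ ∧
      β / 2 ≤ ∑ v ∈ I, w v ∧
      β / 2 ≤ ∑ v ∈ J, w v ∧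
      ∑ v ∈ L, w v < β ∧
      ((∀ a ∈ I, ∀ b ∈ J, G.Adj a b) ∨ (∀ a ∈ I, ∀ b ∈ J, ¬ G.Adj a b)) :=
  weighted_cograph_partition_general G hG β hβ0 w (by linarith) (by simpa only [hsum] using hwv)
end
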